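/- Let α ∈ (π/2, π), let Q = ℝ² \ {(x₁, 0) : x₁ ≥ 0}, and for x ∈ Q write x = (ρ cos φ, ρ sin φ) with ρ > 0, φ ∈ (0, 2π). Let ω ∈ ℂ with Im ω > 0 and define A(x) = ∫_ℝ 𝒵(β, φ) e^{iωρ cosh β} dβ for x ∈ Q with φ ∉ {φ₊, φ₋} (a set of full measure in Q). Then A and its first-order partial derivatives ∂_{x₁} A, ∂_{x₂} A (defined off the two rays φ = φ₊ and φ = φ₋) are square-integrable over Q. -/

import Mathlib

/-!
The kernel depends on `β - iφ` only, and combining its four hyperbolic cotangents gives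
`𝒵 = C (1 / (sinh a sinh b) + 1 / (cosh a cosh b))` with `a = (β + i(φ₊ - φ)) / 4`,
`b = (β + i(φ₋ - φ)) / 4` and `|C| ≤ 1`. Hence `𝒵` decays like `e^{-|β|/2}` and its only
singularities are simple poles at `β = 0`, `φ = φ₊` or `φ = φ₋`.

No cancellation at the poles is needed: interpolating `|sinh (x + iy)| ≥ |sin y|` and
`|sinh (x + iy)| ≥ |sinh x|` with exponents `1/4` and `3/4` bounds `|𝒵|` by a product of a function
of `φ` with singularities `|φ - φ±|^{-1/4}`, which is square-integrable, and a function of `β` with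
singularity `|β|^{-3/4}`, which is integrable (`exists_norm_Zker_le`). Together with
`u e^{-cρu} ≤ C u^{1/4} ρ^{-3/4} e^{-cρ/2}` for `u = cosh β`, every integral
`∫ 𝒵 w e^{iωρ cosh β} dβ` with `|w| ≤ M cosh β` is therefore bounded by
`C g(φ) ρ^{-3/4} e^{-cρ/2}` with `g ∈ L²`, and is square-integrable for `ρ dρ dφ`
(`integrableOn_weighted_sq`).

This is applied to `A` (weight `1`), to `∂_ρ A` (weight `iω cosh β`, by differentiation under the
integral) and to `ρ⁻¹ ∂_φ A` (weight `-ω sinh β`: as `∂_φ 𝒵 = -i ∂_β 𝒵`, an integration by parts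
moves the derivative onto the exponential).
-/

open Real MeasureTheory Set Filter

/-- Complex hyperbolic cotangent. -/
noncomputable def ccoth (z : ℂ) : ℂ := Complex.cosh z / Complex.sinh z

/-- The function `U` from the Sommerfeld kernel construction. -/
noncomputable def Ufun (α : ℝ) (ζ : ℂ) : ℂ :=
  ccoth ((1/4 : ℂ) * (ζ - Complex.I * (π/2 : ℝ) + Complex.I * (α : ℝ))) -
  ccoth ((1/4 : ℂ) * (ζ - Complex.I * (π/2 : ℝ) - Complex.I * (α : ℝ)))

/-- The function `Z`. -/
noncomputable def Zfun (α : ℝ) (z : ℂ) : ℂ :=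
  -Ufun α (z - Complex.I * (π/2 : ℝ)) + Ufun α (z - Complex.I * (5*π/2 : ℝ))

/-- The Sommerfeld-type kernel `𝒵(β, φ) = Z(β + 2πi − iφ)`. -/
noncomputable def Zker (α : ℝ) (β φ : ℝ) : ℂ :=
  Zfun α ((β : ℂ) + 2*(π : ℝ)*Complex.I - Complex.I * (φ : ℝ))



/-! ### Elementary estimates -/

lemma integrable_abs_rpow_mul_exp {s c : ℝ} (hs : -1 < s) (hc : 0 < c) :
    Integrable (fun x : ℝ => |x| ^ s * rexp (-c * |x|)) := by
  have h1 : IntegrableOn (fun x : ℝ => |x| ^ s * rexp (-c * |x|)) (Ioi 0) := by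
    refine (integrableOn_rpow_mul_exp_neg_mul_rpow hs one_pos hc).congr_fun ?_ measurableSet_Ioi
    intro x hx
    simp only [rpow_one, abs_of_pos (mem_Ioi.mp hx)]
  have h2 : IntegrableOn (fun x : ℝ => |x| ^ s * rexp (-c * |x|)) (Iic 0) := by
    rw [integrableOn_Iic_iff_integrableOn_Iio]
    have h := IntegrableOn.comp_neg_Iio (c := (0:ℝ)) (by simpa using h1)
    simpa using h
  rw [← integrableOn_univ, ← Iic_union_Ioi (a := (0:ℝ))]
  exact h2.union h1

lemma normSq_sinh_eq (x y : ℝ) :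
    ‖Complex.sinh ((x : ℂ) + y * Complex.I)‖ ^ 2 = Real.sinh x ^ 2 + Real.sin y ^ 2 := by
  rw [Complex.sinh_add, Complex.cosh_mul_I, Complex.sinh_mul_I, ← Complex.normSq_eq_norm_sq]
  rw [← Complex.ofReal_sinh, ← Complex.ofReal_cosh, ← Complex.ofReal_sin, ← Complex.ofReal_cos]
  rw [← mul_assoc, ← Complex.ofReal_mul, ← Complex.ofReal_mul, Complex.normSq_add_mul_I]
  nlinarith [Real.cosh_sq x, Real.sin_sq_add_cos_sq y]

lemma normSq_cosh_eq (x y : ℝ) :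
    ‖Complex.cosh ((x : ℂ) + y * Complex.I)‖ ^ 2 = Real.sinh x ^ 2 + Real.cos y ^ 2 := by
  rw [Complex.cosh_add, Complex.cosh_mul_I, Complex.sinh_mul_I, ← Complex.normSq_eq_norm_sq]
  rw [← Complex.ofReal_sinh, ← Complex.ofReal_cosh, ← Complex.ofReal_sin, ← Complex.ofReal_cos]
  rw [← mul_assoc, ← Complex.ofReal_mul, ← Complex.ofReal_mul, Complex.normSq_add_mul_I]
  nlinarith [Real.cosh_sq x, Real.sin_sq_add_cos_sq y]

lemma abs_sin_mul_cosh_le_norm_sinh (x y : ℝ) :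
    |Real.sin y| * Real.cosh x ≤ ‖Complex.sinh ((x : ℂ) + y * Complex.I)‖ := by
  apply le_of_sq_le_sq _ (norm_nonneg _)
  rw [normSq_sinh_eq, mul_pow, sq_abs, Real.cosh_sq]
  nlinarith [sq_nonneg (Real.sinh x), Real.sin_sq_le_one y]

lemma abs_cos_mul_cosh_le_norm_cosh (x y : ℝ) :
    |Real.cos y| * Real.cosh x ≤ ‖Complex.cosh ((x : ℂ) + y * Complex.I)‖ := by
  apply le_of_sq_le_sq _ (norm_nonneg _)
  rw [normSq_cosh_eq, mul_pow, sq_abs, Real.cosh_sq]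
  nlinarith [sq_nonneg (Real.sinh x), Real.cos_sq_le_one y]

lemma abs_sinh_le_norm_sinh (x y : ℝ) :
    |Real.sinh x| ≤ ‖Complex.sinh ((x : ℂ) + y * Complex.I)‖ := by
  apply le_of_sq_le_sq _ (norm_nonneg _)
  rw [normSq_sinh_eq, sq_abs]
  nlinarith [sq_nonneg (Real.sin y)]

lemma abs_sin_le_norm_sinh (x y : ℝ) :
    |Real.sin y| ≤ ‖Complex.sinh ((x : ℂ) + y * Complex.I)‖ := by
  apply le_of_sq_le_sq _ (norm_nonneg _)
  rw [normSq_sinh_eq, sq_abs]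
  nlinarith [sq_nonneg (Real.sinh x)]

/-- Interpolation between the two lower bounds for `|sinh (x + iy)|`: the pole at the origin is
split into an integrable singularity in `x` and a square-integrable one in `y`. -/
lemma inv_norm_sinh_le {x y : ℝ} (hx : x ≠ 0) (hy : Real.sin y ≠ 0) :
    ‖Complex.sinh ((x : ℂ) + y * Complex.I)‖⁻¹ ≤
      |Real.sin y| ^ (-(1/4) : ℝ) * |Real.sinh x| ^ (-(3/4) : ℝ) := by
  set N := ‖Complex.sinh ((x : ℂ) + y * Complex.I)‖
  have hs : 0 < |Real.sin y| := abs_pos.mpr hy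
  have hh : 0 < |Real.sinh x| := abs_pos.mpr (Real.sinh_ne_zero.mpr hx)
  have hN : 0 < N := hs.trans_le (abs_sin_le_norm_sinh x y)
  have : N⁻¹ = N ^ (-(1/4) : ℝ) * N ^ (-(3/4) : ℝ) := by
    rw [← Real.rpow_add hN, ← Real.rpow_neg_one]; norm_num
  rw [this]
  have h1 := Real.rpow_le_rpow_of_nonpos hs (abs_sin_le_norm_sinh x y)
    (show (-(1/4) : ℝ) ≤ 0 by norm_num)
  have h2 := Real.rpow_le_rpow_of_nonpos hh (abs_sinh_le_norm_sinh x y)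
    (show (-(3/4) : ℝ) ≤ 0 by norm_num)
  exact mul_le_mul h1 h2 (by positivity) (by positivity)

lemma abs_div_le_abs_sin {t : ℝ} (ht : |t| ≤ 2 * π) : |t| / (2 * π) ≤ |Real.sin (t / 4)| := by
  have h := Real.mul_abs_le_abs_sin (x := t / 4) (by
    rw [abs_div, abs_of_pos (show (0:ℝ) < 4 by norm_num)]; linarith)
  refine le_trans (le_of_eq ?_) h
  rw [abs_div, abs_of_pos (show (0:ℝ) < 4 by norm_num)]
  field_simp; norm_num

lemma abs_mul_exp_le_abs_sinh (x : ℝ) : |x| * rexp (|x| / 2) / 2 ≤ |Real.sinh x| := by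
  rw [Real.abs_sinh]
  set u := |x|
  have hu : 0 ≤ u := abs_nonneg x
  have h1 : Real.sinh u = 2 * Real.sinh (u/2) * Real.cosh (u/2) := by
    rw [← Real.sinh_two_mul, mul_div_cancel₀ u two_ne_zero]
  have h2 : u / 2 ≤ Real.sinh (u/2) := Real.self_le_sinh_iff.mpr (by linarith)
  have h3 : rexp (u/2) / 2 ≤ Real.cosh (u/2) := by
    rw [Real.cosh_eq]; have := Real.exp_pos (-(u/2)); linarith
  rw [h1]
  have := mul_le_mul h2 h3 (by positivity) (by linarith)
  linarith

lemma abs_sinh_rpow_le {x : ℝ} (hx : x ≠ 0) :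
    |Real.sinh x| ^ (-(3/4) : ℝ) ≤
      2 ^ (3/4 : ℝ) * (|x| ^ (-(3/4) : ℝ) * rexp (-(3/8) * |x|)) := by
  have hx' : 0 < |x| := abs_pos.mpr hx
  refine (Real.rpow_le_rpow_of_nonpos (by positivity) (abs_mul_exp_le_abs_sinh x)
    (by norm_num)).trans (le_of_eq ?_)
  rw [Real.div_rpow (by positivity) (by positivity), Real.mul_rpow (by positivity) (by positivity),
    ← Real.exp_mul, Real.rpow_neg (show (0:ℝ) ≤ 2 by norm_num), div_inv_eq_mul]
  ring_nf

lemma cosh_rpow_le (β : ℝ) : Real.cosh β ^ (1/4 : ℝ) ≤ 2 * Real.cosh (β / 4) := by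
  have h1 : Real.cosh β ≤ rexp |β| := by
    rw [← Real.cosh_abs, Real.cosh_eq]
    have : rexp (-|β|) ≤ rexp |β| := Real.exp_le_exp.mpr (by linarith [abs_nonneg β])
    linarith
  have h2 : rexp (|β| / 4) ≤ 2 * Real.cosh (β / 4) := by
    rw [← Real.cosh_abs, Real.cosh_eq, abs_div, abs_of_pos (show (0:ℝ) < 4 by norm_num)]
    have := Real.exp_pos (-(|β| / 4)); linarith
  refine (Real.rpow_le_rpow (Real.cosh_pos β).le h1 (by norm_num)).trans ?_
  rw [← Real.exp_mul]
  rwa [show |β| * (1/4 : ℝ) = |β| / 4 by ring]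

lemma mul_exp_neg_le {u c ρ : ℝ} (hu : 1 ≤ u) (hc : 0 < c) (hρ : 0 < ρ) :
    u * rexp (-(c * ρ * u)) ≤
      u ^ (1/4 : ℝ) * ((c / 2) ^ (-(3/4) : ℝ) * (ρ ^ (-(3/4) : ℝ) * rexp (-(c / 2) * ρ))) := by
  have hu0 : 0 < u := by linarith
  set t := c / 2 * ρ * u with ht
  have htp : 0 < t := by positivity
  have h1 : t ^ (3/4 : ℝ) ≤ rexp t := by
    have hle : t ≤ rexp t := by linarith [Real.add_one_le_exp t]
    refine (Real.rpow_le_rpow htp.le hle (by norm_num)).trans ?_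
    rw [← Real.exp_mul]; exact Real.exp_le_exp.mpr (by linarith)
  have h2 : u = u ^ (1/4 : ℝ) * (t ^ (3/4 : ℝ) * ((c / 2) ^ (-(3/4) : ℝ) * ρ ^ (-(3/4) : ℝ))) := by
    rw [ht, Real.mul_rpow (by positivity) (by positivity),
      Real.mul_rpow (by positivity) (by positivity), Real.rpow_neg (by positivity),
      Real.rpow_neg (by positivity)]
    have e : u ^ (1/4 : ℝ) * u ^ (3/4 : ℝ) = u := by
      rw [← Real.rpow_add hu0]; norm_num
    have p1 : (c / 2) ^ (3/4 : ℝ) ≠ 0 := by positivity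
    have p2 : ρ ^ (3/4 : ℝ) ≠ 0 := by positivity
    calc u = u ^ (1/4 : ℝ) * u ^ (3/4 : ℝ) := e.symm
      _ = _ := by field_simp
  have h3 : rexp (-(c * ρ * u)) ≤ rexp (-t) * rexp (-(c / 2) * ρ) := by
    rw [← Real.exp_add]; apply Real.exp_le_exp.mpr
    have : c / 2 * ρ ≤ t := by rw [ht]; exact le_mul_of_one_le_right (by positivity) hu
    have e : c * ρ * u = 2 * t := by rw [ht]; ring
    linarith
  have h4 : t ^ (3/4 : ℝ) * rexp (-t) ≤ 1 := by
    rw [Real.exp_neg, ← div_eq_mul_inv]; exact (div_le_one (Real.exp_pos t)).mpr h1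
  calc u * rexp (-(c * ρ * u)) ≤ u * (rexp (-t) * rexp (-(c / 2) * ρ)) := by gcongr
    _ = (t ^ (3/4 : ℝ) * rexp (-t)) *
        (u ^ (1/4 : ℝ) * ((c / 2) ^ (-(3/4) : ℝ) * (ρ ^ (-(3/4) : ℝ) * rexp (-(c / 2) * ρ)))) := by
        nth_rewrite 1 [h2]; ring
    _ ≤ 1 * _ := by gcongr
    _ = _ := one_mul _

/-! ### The kernel -/

/-- The kernel as a function of the single complex variable `z = β - iφ`. -/
noncomputable def Zq (α : ℝ) (z : ℂ) : ℂ :=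
  -ccoth ((z + (π + α : ℝ) * Complex.I) / 4) + ccoth ((z + (π - α : ℝ) * Complex.I) / 4)
    + ccoth ((z + (α - π : ℝ) * Complex.I) / 4) - ccoth ((z + (-π - α : ℝ) * Complex.I) / 4)

/-- The complex derivative of `Zq`. -/
noncomputable def Zq' (α : ℝ) (z : ℂ) : ℂ :=
  (1/4 : ℂ) * ((Complex.sinh ((z + (π + α : ℝ) * Complex.I) / 4) ^ 2)⁻¹
    - (Complex.sinh ((z + (π - α : ℝ) * Complex.I) / 4) ^ 2)⁻¹
    - (Complex.sinh ((z + (α - π : ℝ) * Complex.I) / 4) ^ 2)⁻¹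
    + (Complex.sinh ((z + (-π - α : ℝ) * Complex.I) / 4) ^ 2)⁻¹)

lemma Zker_eq_Zq (α β φ : ℝ) : Zker α β φ = Zq α (β - Complex.I * φ) := by
  unfold Zker Zfun Ufun Zq
  push_cast
  ring_nf

lemma quarter_eq (β φ p : ℝ) : ((β : ℂ) - Complex.I * φ + (p : ℝ) * Complex.I) / 4 =
    ((β / 4 : ℝ) : ℂ) + (((p - φ) / 4 : ℝ) : ℂ) * Complex.I := by
  push_cast; ring

lemma sinh_quarter_ne_zero {β φ p : ℝ} (h : Real.sin ((p - φ) / 4) ≠ 0) :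
    Complex.sinh (((β : ℂ) - Complex.I * φ + (p : ℝ) * Complex.I) / 4) ≠ 0 := by
  rw [quarter_eq, ← norm_pos_iff]
  exact (abs_pos.mpr h).trans_le (abs_sin_le_norm_sinh _ _)

lemma hasDerivAt_ccoth {z : ℂ} (hz : Complex.sinh z ≠ 0) :
    HasDerivAt ccoth (-(Complex.sinh z ^ 2)⁻¹) z := by
  have h := (Complex.hasDerivAt_cosh z).div (Complex.hasDerivAt_sinh z) hz
  have e : (Complex.sinh z * Complex.sinh z - Complex.cosh z * Complex.cosh z)
      / Complex.sinh z ^ 2 = -(Complex.sinh z ^ 2)⁻¹ := by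
    rw [← neg_one_mul, ← div_eq_mul_inv]
    congr 1
    linear_combination -Complex.cosh_sq_sub_sinh_sq z
  rw [← e]
  exact h

lemma hasDerivAt_ccoth_quarter {z p : ℂ} (hz : Complex.sinh ((z + p) / 4) ≠ 0) :
    HasDerivAt (fun w : ℂ => ccoth ((w + p) / 4)) (-(Complex.sinh ((z + p) / 4) ^ 2)⁻¹ * (1/4)) z := by
  have h : HasDerivAt (fun w : ℂ => (w + p) / 4) (1/4) z :=
    ((hasDerivAt_id z).add_const p).div_const 4
  exact HasDerivAt.comp z (h₂ := ccoth) (hasDerivAt_ccoth hz) h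

/-- None of the four hyperbolic cotangents making up the kernel has a pole on the line
`{β - iφ : β ∈ ℝ}`. -/
def Regular (α φ : ℝ) : Prop :=
  Real.sin ((π + α - φ) / 4) ≠ 0 ∧ Real.sin ((π - α - φ) / 4) ≠ 0 ∧
    Real.sin ((α - π - φ) / 4) ≠ 0 ∧ Real.sin ((-π - α - φ) / 4) ≠ 0

lemma sin_quarter_ne_zero {t : ℝ} (h1 : |t| < 4 * π) (h2 : t ≠ 0) : Real.sin (t / 4) ≠ 0 := by
  have := abs_lt.mp h1
  rw [Ne, Real.sin_eq_zero_iff_of_lt_of_lt (by linarith) (by linarith)]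
  simpa using h2

lemma regular_of_mem {α φ : ℝ} (hα : α ∈ Ioo (π / 2) π)
    (hφ : φ ∈ Ioo (0:ℝ) (2 * π) \ {π + α, π - α}) : Regular α φ := by
  obtain ⟨⟨h0, h1⟩, h2⟩ := hφ
  obtain ⟨ha, hb⟩ := hα
  simp only [mem_insert_iff, mem_singleton_iff, not_or] at h2
  have hp := Real.pi_pos
  refine ⟨sin_quarter_ne_zero ?_ ?_, sin_quarter_ne_zero ?_ ?_, sin_quarter_ne_zero ?_ ?_,
    sin_quarter_ne_zero ?_ ?_⟩
  · rw [abs_lt]; constructor <;> linarith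
  · intro h; exact h2.1 (by linarith)
  · rw [abs_lt]; constructor <;> linarith
  · intro h; exact h2.2 (by linarith)
  · rw [abs_lt]; constructor <;> linarith
  · intro h; linarith
  · rw [abs_lt]; constructor <;> linarith
  · intro h; linarith

lemma hasDerivAt_Zq {α β φ : ℝ} (h : Regular α φ) :
    HasDerivAt (Zq α) (Zq' α (β - Complex.I * φ)) (β - Complex.I * φ) := by
  obtain ⟨h1, h2, h3, h4⟩ := h
  have := (((hasDerivAt_ccoth_quarter (sinh_quarter_ne_zero (β := β) h1)).neg.add
    (hasDerivAt_ccoth_quarter (sinh_quarter_ne_zero (β := β) h2))).add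
    (hasDerivAt_ccoth_quarter (sinh_quarter_ne_zero (β := β) h3))).sub
    (hasDerivAt_ccoth_quarter (sinh_quarter_ne_zero (β := β) h4))
  refine this.congr_deriv ?_
  unfold Zq'
  ring

lemma hasDerivAt_Zker_left {α β φ : ℝ} (h : Regular α φ) :
    HasDerivAt (fun b : ℝ => Zker α b φ) (Zq' α (β - Complex.I * φ)) β := by
  simp only [Zker_eq_Zq]
  have h1 : HasDerivAt (fun b : ℝ => (b : ℂ) - Complex.I * φ) 1 β :=
    (Complex.ofRealCLM.hasDerivAt (x := β)).sub_const _
  have h2 := (hasDerivAt_Zq (β := β) h).comp β h1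
  rw [mul_one] at h2
  exact h2

lemma hasDerivAt_Zker_right {α β φ : ℝ} (h : Regular α φ) :
    HasDerivAt (fun t : ℝ => Zker α β t) (-Complex.I * Zq' α (β - Complex.I * φ)) φ := by
  simp only [Zker_eq_Zq]
  have h1 : HasDerivAt (fun b : ℝ => (β : ℂ) - Complex.I * b) (-Complex.I) φ := by
    simpa using ((Complex.ofRealCLM.hasDerivAt (x := φ)).const_mul Complex.I).const_sub (β : ℂ)
  rw [mul_comm]
  exact (hasDerivAt_Zq (β := β) h).comp φ h1

lemma norm_inv_sinh_sq_le {β φ p m : ℝ} (hm : 0 < m) (h : m < |Real.sin ((p - φ) / 4)|) :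
    ‖(Complex.sinh (((β : ℂ) - Complex.I * φ + (p : ℝ) * Complex.I) / 4) ^ 2)⁻¹‖ ≤ (m ^ 2)⁻¹ := by
  rw [quarter_eq, norm_inv, norm_pow]
  have := h.le.trans (abs_sin_le_norm_sinh (β / 4) _)
  gcongr

lemma eventually_lt_abs_sin {φ p : ℝ} (h : Real.sin ((p - φ) / 4) ≠ 0) :
    ∃ m > 0, ∀ᶠ t in nhds φ, m < |Real.sin ((p - t) / 4)| := by
  refine ⟨|Real.sin ((p - φ) / 4)| / 2, by positivity, ?_⟩
  have hc : Continuous fun t : ℝ => |Real.sin ((p - t) / 4)| := by fun_prop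
  exact hc.continuousAt.eventually (lt_mem_nhds (half_lt_self (abs_pos.mpr h)))

lemma eventually_regular_and_bound {α φ : ℝ} (h : Regular α φ) :
    ∃ C : ℝ, ∀ᶠ t in nhds φ, Regular α t ∧ ∀ β : ℝ, ‖Zq' α (β - Complex.I * t)‖ ≤ C := by
  obtain ⟨h1, h2, h3, h4⟩ := h
  obtain ⟨m1, hm1, e1⟩ := eventually_lt_abs_sin h1
  obtain ⟨m2, hm2, e2⟩ := eventually_lt_abs_sin h2
  obtain ⟨m3, hm3, e3⟩ := eventually_lt_abs_sin h3
  obtain ⟨m4, hm4, e4⟩ := eventually_lt_abs_sin h4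
  refine ⟨(m1 ^ 2)⁻¹ + (m2 ^ 2)⁻¹ + (m3 ^ 2)⁻¹ + (m4 ^ 2)⁻¹, ?_⟩
  filter_upwards [e1, e2, e3, e4] with t t1 t2 t3 t4
  refine ⟨⟨abs_pos.mp (hm1.trans t1), abs_pos.mp (hm2.trans t2), abs_pos.mp (hm3.trans t3),
    abs_pos.mp (hm4.trans t4)⟩, fun β => ?_⟩
  have b1 := norm_inv_sinh_sq_le (β := β) hm1 t1
  have b2 := norm_inv_sinh_sq_le (β := β) hm2 t2
  have b3 := norm_inv_sinh_sq_le (β := β) hm3 t3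
  have b4 := norm_inv_sinh_sq_le (β := β) hm4 t4
  unfold Zq'
  rw [norm_mul]
  have hq : ‖(1/4 : ℂ)‖ ≤ 1 := by norm_num
  refine (mul_le_of_le_one_left (norm_nonneg _) hq).trans ?_
  refine (norm_add_le _ _).trans (add_le_add ((norm_sub_le _ _).trans (add_le_add
    ((norm_sub_le _ _).trans (add_le_add b1 b2)) b3)) b4)

lemma sinh_sub_half_pi (w : ℂ) :
    Complex.sinh (w - (π / 2 : ℝ) * Complex.I) = -Complex.I * Complex.cosh w := by
  rw [Complex.sinh_sub, Complex.cosh_mul_I, Complex.sinh_mul_I, ← Complex.ofReal_cos,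
    ← Complex.ofReal_sin]
  simp
  ring

lemma cosh_sub_half_pi (w : ℂ) :
    Complex.cosh (w - (π / 2 : ℝ) * Complex.I) = -Complex.I * Complex.sinh w := by
  rw [Complex.cosh_sub, Complex.cosh_mul_I, Complex.sinh_mul_I, ← Complex.ofReal_cos,
    ← Complex.ofReal_sin]
  simp
  ring

lemma ccoth_sub_half_pi (w : ℂ) :
    ccoth (w - (π / 2 : ℝ) * Complex.I) = Complex.sinh w / Complex.cosh w := by
  unfold ccoth
  rw [sinh_sub_half_pi, cosh_sub_half_pi, mul_div_mul_left _ _ (by simp)]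

/-- Combining the four terms exhibits the decay `e^{-|β|/2}` of the kernel, which no single
hyperbolic cotangent has. -/
lemma norm_four_terms_le {a b : ℂ} {t : ℝ} (hab : b - a = t * Complex.I)
    (ha : Complex.sinh a ≠ 0) (hb : Complex.sinh b ≠ 0) (hca : Complex.cosh a ≠ 0)
    (hcb : Complex.cosh b ≠ 0) :
    ‖-ccoth a + ccoth b + ccoth (a - (π / 2 : ℝ) * Complex.I)
        - ccoth (b - (π / 2 : ℝ) * Complex.I)‖ ≤
      ‖Complex.sinh a‖⁻¹ * ‖Complex.sinh b‖⁻¹ + ‖Complex.cosh a‖⁻¹ * ‖Complex.cosh b‖⁻¹ := by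
  have hs : Complex.sinh (b - a) =
      Complex.sinh b * Complex.cosh a - Complex.cosh b * Complex.sinh a := Complex.sinh_sub b a
  have hn : ‖Complex.sinh (b - a)‖ ≤ 1 := by
    rw [hab, Complex.sinh_mul_I, ← Complex.ofReal_sin, norm_mul, Complex.norm_I, mul_one,
      Complex.norm_real]
    exact Real.abs_sin_le_one t
  have e : -ccoth a + ccoth b + ccoth (a - (π / 2 : ℝ) * Complex.I)
        - ccoth (b - (π / 2 : ℝ) * Complex.I) =
      -Complex.sinh (b - a) * ((Complex.sinh a)⁻¹ * (Complex.sinh b)⁻¹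
        + (Complex.cosh a)⁻¹ * (Complex.cosh b)⁻¹) := by
    rw [ccoth_sub_half_pi, ccoth_sub_half_pi, hs]
    unfold ccoth
    field_simp
    ring
  rw [e, norm_mul, norm_neg]
  refine (mul_le_of_le_one_left (norm_nonneg _) hn).trans ((norm_add_le _ _).trans ?_)
  simp only [norm_mul, norm_inv, le_refl]

/-- The angular majorant of the kernel; it blows up at the two critical rays, but is
square-integrable over the angles. -/
noncomputable def angMaj (α φ : ℝ) : ℝ :=
  1 + |π + α - φ| ^ (-(1/4) : ℝ) + |π - α - φ| ^ (-(1/4) : ℝ)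

lemma one_le_angMaj (α φ : ℝ) : 1 ≤ angMaj α φ := by
  unfold angMaj
  have h1 : 0 ≤ |π + α - φ| ^ (-(1/4) : ℝ) := by positivity
  have h2 : 0 ≤ |π - α - φ| ^ (-(1/4) : ℝ) := by positivity
  linarith

/-- Of the two factors in `1 / (sinh a * sinh b)`, the one away from its pole supplies the decay
and the other one is treated by interpolation. -/
lemma inv_sinh_mul_inv_sinh_le {x s t : ℝ} (hx : x ≠ 0) (hs0 : s ≠ 0) (hs : |s| ≤ 2 * π)
    (ht : |t| ≤ 2 * π) (ht' : π / 2 ≤ |t|) :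
    ‖Complex.sinh ((x : ℂ) + (s / 4 : ℝ) * Complex.I)‖⁻¹ *
      ‖Complex.sinh ((x : ℂ) + (t / 4 : ℝ) * Complex.I)‖⁻¹ ≤
      4 * (2 * π) ^ (1/4 : ℝ) * |s| ^ (-(1/4) : ℝ) *
        ((Real.cosh x)⁻¹ * |Real.sinh x| ^ (-(3/4) : ℝ)) := by
  have hp := Real.pi_pos
  have hsp : 0 < |s| := abs_pos.mpr hs0
  have hss := abs_div_le_abs_sin hs
  have h1 : ‖Complex.sinh ((x : ℂ) + (s / 4 : ℝ) * Complex.I)‖⁻¹ ≤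
      (2 * π) ^ (1/4 : ℝ) * |s| ^ (-(1/4) : ℝ) * |Real.sinh x| ^ (-(3/4) : ℝ) := by
    have hne : Real.sin (s / 4) ≠ 0 :=
      abs_pos.mp (lt_of_lt_of_le (by positivity) hss)
    refine (inv_norm_sinh_le hx hne).trans ?_
    gcongr
    refine (Real.rpow_le_rpow_of_nonpos (by positivity) hss (by norm_num)).trans (le_of_eq ?_)
    rw [Real.div_rpow (by positivity) (by positivity),
      Real.rpow_neg (show (0:ℝ) ≤ 2 * π by positivity), div_inv_eq_mul, mul_comm]
  have h2 : ‖Complex.sinh ((x : ℂ) + (t / 4 : ℝ) * Complex.I)‖⁻¹ ≤ 4 * (Real.cosh x)⁻¹ := by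
    have hc := Real.cosh_pos x
    have h3 : (1/4 : ℝ) ≤ |Real.sin (t / 4)| := by
      refine le_trans ?_ (abs_div_le_abs_sin ht)
      rw [le_div_iff₀ (by positivity)]; linarith
    have h4 : 1/4 * Real.cosh x ≤ ‖Complex.sinh ((x : ℂ) + (t / 4 : ℝ) * Complex.I)‖ :=
      le_trans (by gcongr) (abs_sin_mul_cosh_le_norm_sinh x (t / 4))
    refine (inv_anti₀ (by positivity) h4).trans (le_of_eq ?_)
    rw [mul_inv]; norm_num
  refine (mul_le_mul h1 h2 (by positivity) (by positivity)).trans (le_of_eq ?_)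
  ring

/-- The absolute bound on the kernel which separates the variables. -/
lemma exists_norm_Zker_le {α : ℝ} (hα : α ∈ Ioo (π / 2) π) :
    ∃ K > 0, ∀ φ ∈ Ioo (0:ℝ) (2 * π) \ {π + α, π - α}, ∀ β : ℝ, β ≠ 0 →
      ‖Zker α β φ‖ ≤ K * angMaj α φ *
        ((Real.cosh (β / 4))⁻¹ * |Real.sinh (β / 4)| ^ (-(3/4) : ℝ)) := by
  have hp := Real.pi_pos
  obtain ⟨ha, hb⟩ := hα
  set δ := Real.cos ((π + α) / 4) with hδ
  have hδ0 : 0 < δ := Real.cos_pos_of_mem_Ioo ⟨by linarith, by linarith⟩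
  refine ⟨4 * (2 * π) ^ (1/4 : ℝ) + δ⁻¹ * δ⁻¹, by positivity, ?_⟩
  intro φ hφ β hβ
  obtain ⟨r1, r2, -, -⟩ := regular_of_mem ⟨ha, hb⟩ hφ
  obtain ⟨⟨h0, h1⟩, hne⟩ := hφ
  simp only [mem_insert_iff, mem_singleton_iff, not_or] at hne
  set s := π + α - φ with hs
  set t := π - α - φ with ht
  set x := β / 4 with hx
  have hx0 : x ≠ 0 := by rw [hx]; positivity
  have hs0 : s ≠ 0 := fun h => hne.1 (by linarith)
  have ht0 : t ≠ 0 := fun h => hne.2 (by linarith)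
  have hsa : |s| ≤ π + α := abs_le.mpr ⟨by linarith, by linarith⟩
  have hta : |t| ≤ π + α := abs_le.mpr ⟨by linarith, by linarith⟩
  set a : ℂ := (x : ℂ) + (s / 4 : ℝ) * Complex.I with hadef
  set b : ℂ := (x : ℂ) + (t / 4 : ℝ) * Complex.I with hbdef
  have hc := Real.cosh_pos x
  have hcos : ∀ u : ℝ, |u| ≤ π + α → δ ≤ |Real.cos (u / 4)| := by
    intro u hu
    refine le_trans ?_ (le_abs_self _)
    rw [← Real.cos_abs (u / 4), abs_div, abs_of_pos (show (0:ℝ) < 4 by norm_num)]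
    exact Real.cos_le_cos_of_nonneg_of_le_pi (by positivity) (by linarith) (by linarith)
  have hcosh : ∀ u : ℝ, |u| ≤ π + α →
      δ * Real.cosh x ≤ ‖Complex.cosh ((x : ℂ) + (u / 4 : ℝ) * Complex.I)‖ := fun u hu =>
    le_trans (mul_le_mul_of_nonneg_right (hcos u hu) hc.le) (abs_cos_mul_cosh_le_norm_cosh x (u / 4))
  have hca := hcosh s hsa
  have hcb := hcosh t hta
  have hδc : 0 < δ * Real.cosh x := by positivity
  have hZ : Zker α β φ = -ccoth a + ccoth b + ccoth (a - (π / 2 : ℝ) * Complex.I)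
        - ccoth (b - (π / 2 : ℝ) * Complex.I) := by
    rw [Zker_eq_Zq]; unfold Zq
    simp only [quarter_eq, hadef, hbdef]
    have e1 : ((((α - π) - φ) / 4 : ℝ) : ℂ) * Complex.I =
      (s / 4 : ℝ) * Complex.I - (π / 2 : ℝ) * Complex.I := by rw [hs]; push_cast; ring
    have e2 : ((((-π - α) - φ) / 4 : ℝ) : ℂ) * Complex.I =
      (t / 4 : ℝ) * Complex.I - (π / 2 : ℝ) * Complex.I := by rw [ht]; push_cast; ring
    rw [e1, e2, ← hx, ← add_sub_assoc, ← add_sub_assoc]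
  have hab : b - a = ((t / 4 - s / 4 : ℝ) : ℂ) * Complex.I := by
    rw [hadef, hbdef]; push_cast; ring
  have hmain := norm_four_terms_le hab
    (norm_pos_iff.mp ((abs_pos.mpr r1).trans_le (abs_sin_le_norm_sinh x _)))
    (norm_pos_iff.mp ((abs_pos.mpr r2).trans_le (abs_sin_le_norm_sinh x _)))
    (norm_pos_iff.mp (hδc.trans_le hca)) (norm_pos_iff.mp (hδc.trans_le hcb))
  rw [hZ]
  refine hmain.trans ?_
  set H := (Real.cosh x)⁻¹ * |Real.sinh x| ^ (-(3/4) : ℝ) with hH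
  have hH0 : 0 ≤ H := by positivity
  have hs' : 0 ≤ |s| ^ (-(1/4) : ℝ) := by positivity
  have ht' : 0 ≤ |t| ^ (-(1/4) : ℝ) := by positivity
  have hG : angMaj α φ = 1 + |s| ^ (-(1/4) : ℝ) + |t| ^ (-(1/4) : ℝ) := rfl
  have hS : ‖Complex.sinh a‖⁻¹ * ‖Complex.sinh b‖⁻¹ ≤
      4 * (2 * π) ^ (1/4 : ℝ) * angMaj α φ * H := by
    -- the two poles are `2α > π` apart, so at least one of them is at distance `π / 2`
    have hor : π / 2 ≤ |t| ∨ π / 2 ≤ |s| := by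
      by_contra! hcon
      have e1 := (abs_lt.mp hcon.1).1
      have e2 := (abs_lt.mp hcon.2).2
      linarith
    rcases hor with h | h
    · refine (inv_sinh_mul_inv_sinh_le hx0 hs0 (by linarith) (by linarith) h).trans ?_
      gcongr
      rw [hG]; linarith
    · rw [mul_comm ‖Complex.sinh a‖⁻¹]
      refine (inv_sinh_mul_inv_sinh_le hx0 ht0 (by linarith) (by linarith) h).trans ?_
      gcongr
      rw [hG]; linarith
  have hC : ‖Complex.cosh a‖⁻¹ * ‖Complex.cosh b‖⁻¹ ≤ δ⁻¹ * δ⁻¹ * angMaj α φ * H := by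
    have i1 := inv_anti₀ hδc hca
    have i2 := inv_anti₀ hδc hcb
    have hle : (Real.cosh x)⁻¹ ≤ |Real.sinh x| ^ (-(3/4) : ℝ) := by
      have hsp : 0 < |Real.sinh x| := abs_pos.mpr (Real.sinh_ne_zero.mpr hx0)
      have hsc : |Real.sinh x| ≤ Real.cosh x :=
        abs_le_of_sq_le_sq (by rw [Real.cosh_sq]; linarith) hc.le
      calc (Real.cosh x)⁻¹ = Real.cosh x ^ (-1 : ℝ) := (Real.rpow_neg_one _).symm
        _ ≤ Real.cosh x ^ (-(3/4) : ℝ) :=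
          Real.rpow_le_rpow_of_exponent_le (Real.one_le_cosh x) (by norm_num)
        _ ≤ _ := Real.rpow_le_rpow_of_nonpos hsp hsc (by norm_num)
    calc ‖Complex.cosh a‖⁻¹ * ‖Complex.cosh b‖⁻¹
        ≤ (δ * Real.cosh x)⁻¹ * (δ * Real.cosh x)⁻¹ :=
          mul_le_mul i1 i2 (by positivity) (by positivity)
      _ = δ⁻¹ * δ⁻¹ * 1 * ((Real.cosh x)⁻¹ * (Real.cosh x)⁻¹) := by rw [mul_inv]; ring
      _ ≤ δ⁻¹ * δ⁻¹ * angMaj α φ * H := by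
        have := one_le_angMaj α φ
        rw [hH]; gcongr
  linarith

/-- The majorant in `β` of the kernel times the exponential factor. -/
noncomputable def radMaj (β : ℝ) : ℝ := |β / 4| ^ (-(3/4) : ℝ) * rexp (-(3/8) * |β / 4|)

lemma integrable_radMaj : Integrable radMaj :=
  (integrable_abs_rpow_mul_exp (s := -(3/4)) (c := 3/8) (by norm_num) (by norm_num)).comp_div
    (by norm_num : (4:ℝ) ≠ 0)

lemma exists_norm_Zker_mul_cosh_le {α c : ℝ} (hα : α ∈ Ioo (π / 2) π) (hc : 0 < c) :
    ∃ K > 0, ∀ φ ∈ Ioo (0:ℝ) (2 * π) \ {π + α, π - α}, ∀ ρ > 0, ∀ β : ℝ, β ≠ 0 →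
      ‖Zker α β φ‖ * (Real.cosh β * rexp (-(c * ρ * Real.cosh β))) ≤
        K * angMaj α φ * (ρ ^ (-(3/4) : ℝ) * rexp (-(c / 2) * ρ)) * radMaj β := by
  obtain ⟨K, hK, h⟩ := exists_norm_Zker_le hα
  refine ⟨K * 2 * (c / 2) ^ (-(3/4) : ℝ) * 2 ^ (3/4 : ℝ), by positivity, ?_⟩
  intro φ hφ ρ hρ β hβ
  have hG := one_le_angMaj α φ
  have h4 : β / 4 ≠ 0 := by positivity
  have hcp := Real.cosh_pos (β / 4)
  set R := ρ ^ (-(3/4) : ℝ) * rexp (-(c / 2) * ρ) with hR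
  have hR0 : 0 ≤ R := by positivity
  have b1 := h φ hφ β hβ
  have b2 : Real.cosh β * rexp (-(c * ρ * Real.cosh β)) ≤
      2 * Real.cosh (β / 4) * ((c / 2) ^ (-(3/4) : ℝ) * R) :=
    (mul_exp_neg_le (Real.one_le_cosh β) hc hρ).trans
      (mul_le_mul_of_nonneg_right (cosh_rpow_le β) (by positivity))
  have b3 := abs_sinh_rpow_le h4
  have hcβ := Real.cosh_pos β
  calc _ ≤ (K * angMaj α φ * ((Real.cosh (β / 4))⁻¹ * |Real.sinh (β / 4)| ^ (-(3/4) : ℝ))) *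
        (2 * Real.cosh (β / 4) * ((c / 2) ^ (-(3/4) : ℝ) * R)) :=
        mul_le_mul b1 b2 (by positivity) (by positivity)
    _ = K * angMaj α φ * 2 * (c / 2) ^ (-(3/4) : ℝ) * R * |Real.sinh (β / 4)| ^ (-(3/4) : ℝ) := by
        field_simp
    _ ≤ K * angMaj α φ * 2 * (c / 2) ^ (-(3/4) : ℝ) * R * (2 ^ (3/4 : ℝ) * radMaj β) := by
        unfold radMaj; gcongr
    _ = _ := by ring

/-! ### Weighted integrals of the kernel -/

/-- The exponential factor `e^{iωρ cosh β}`. -/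
noncomputable def osc (ω : ℂ) (ρ β : ℝ) : ℂ :=
  Complex.exp (Complex.I * ω * (ρ : ℂ) * (Real.cosh β : ℂ))

lemma norm_osc (ω : ℂ) (ρ β : ℝ) : ‖osc ω ρ β‖ = rexp (-(ω.im * ρ * Real.cosh β)) := by
  unfold osc
  rw [Complex.norm_exp]
  congr 1
  rw [Complex.re_mul_ofReal, Complex.re_mul_ofReal]
  simp

lemma measurable_ccoth : Measurable ccoth := by
  unfold ccoth
  exact Complex.measurable_cosh.div Complex.measurable_sinh

lemma measurable_Zq (α : ℝ) : Measurable (Zq α) := by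
  unfold Zq
  have h : ∀ p : ℂ, Measurable fun z : ℂ => ccoth ((z + p) / 4) := fun p =>
    measurable_ccoth.comp ((measurable_id.add_const p).div_const 4)
  exact (((h _).neg.add (h _)).add (h _)).sub (h _)

lemma measurable_Zq' (α : ℝ) : Measurable (Zq' α) := by
  unfold Zq'
  have h : ∀ p : ℂ, Measurable fun z : ℂ => (Complex.sinh ((z + p) / 4) ^ 2)⁻¹ := fun p =>
    ((Complex.measurable_sinh.comp ((measurable_id.add_const p).div_const 4)).pow_const 2).inv
  exact ((((h _).sub (h _)).sub (h _)).add (h _)).const_mul _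

lemma measurable_Zker {ι : Type*} [MeasurableSpace ι] (α : ℝ) {f g : ι → ℝ} (hf : Measurable f)
    (hg : Measurable g) : Measurable fun x => Zker α (f x) (g x) := by
  simp only [Zker_eq_Zq]
  have h : Measurable fun x => (f x : ℂ) - Complex.I * (g x : ℂ) := by fun_prop
  exact (measurable_Zq α).comp h

lemma measurable_Zker_left (α φ : ℝ) : Measurable fun β : ℝ => Zker α β φ :=
  measurable_Zker α measurable_id measurable_const

lemma measurable_osc {ι : Type*} [MeasurableSpace ι] (ω : ℂ) {f g : ι → ℝ} (hf : Measurable f)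
    (hg : Measurable g) : Measurable fun x => osc ω (f x) (g x) := by
  unfold osc
  fun_prop

lemma measurable_osc_right (ω : ℂ) (ρ : ℝ) : Measurable fun β : ℝ => osc ω ρ β :=
  measurable_osc ω measurable_const measurable_id

lemma measurable_exp_cosh (a : ℝ) : Measurable fun β : ℝ => rexp (-(a * Real.cosh β)) := by
  fun_prop

lemma integrable_kernel {α c φ ρ : ℝ} (hα : α ∈ Ioo (π / 2) π) (hc : 0 < c)
    (hφ : φ ∈ Ioo (0:ℝ) (2 * π) \ {π + α, π - α}) (hρ : 0 < ρ) :
    Integrable fun β : ℝ => ‖Zker α β φ‖ * (Real.cosh β * rexp (-(c * ρ * Real.cosh β))) := by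
  obtain ⟨K, -, h⟩ := exists_norm_Zker_mul_cosh_le hα hc
  refine Integrable.mono' (integrable_radMaj.const_mul
    (K * angMaj α φ * (ρ ^ (-(3/4) : ℝ) * rexp (-(c / 2) * ρ)))) ?_ ?_
  · exact ((measurable_Zker_left α φ).norm.mul
      (Real.continuous_cosh.measurable.mul (measurable_exp_cosh _))).aestronglyMeasurable
  · filter_upwards [Measure.ae_ne volume (0:ℝ)] with β hβ
    rw [Real.norm_of_nonneg (by have := Real.cosh_pos β; positivity)]
    exact h φ hφ ρ hρ β hβ

lemma norm_weighted_le {α φ ρ M : ℝ} {ω : ℂ} {w : ℝ → ℂ} (hM : ∀ β, ‖w β‖ ≤ M * Real.cosh β)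
    (β : ℝ) : ‖Zker α β φ * w β * osc ω ρ β‖ ≤
      M * (‖Zker α β φ‖ * (Real.cosh β * rexp (-(ω.im * ρ * Real.cosh β)))) := by
  rw [norm_mul, norm_mul, norm_osc]
  calc _ ≤ ‖Zker α β φ‖ * (M * Real.cosh β) * rexp (-(ω.im * ρ * Real.cosh β)) := by
        gcongr; exact hM β
    _ = _ := by ring

lemma integrable_weighted {α φ ρ M : ℝ} {ω : ℂ} {w : ℝ → ℂ} (hα : α ∈ Ioo (π / 2) π)
    (hω : 0 < ω.im) (hφ : φ ∈ Ioo (0:ℝ) (2 * π) \ {π + α, π - α}) (hρ : 0 < ρ)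
    (hw : Measurable w) (hM : ∀ β, ‖w β‖ ≤ M * Real.cosh β) :
    Integrable fun β : ℝ => Zker α β φ * w β * osc ω ρ β :=
  ((integrable_kernel hα hω hφ hρ).const_mul M).mono'
    (((measurable_Zker_left α φ).mul hw).mul (measurable_osc_right ω ρ)).aestronglyMeasurable
    (Eventually.of_forall (norm_weighted_le hM))

lemma integrableOn_angMaj_sq (α : ℝ) (hα : α ∈ Ioo (π / 2) π) :
    IntegrableOn (fun φ => angMaj α φ ^ 2) (Ioo (0:ℝ) (2 * π) \ {π + α, π - α}) := by
  have hp := Real.pi_pos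
  have hI := integrable_abs_rpow_mul_exp (s := -(1/2)) (c := 1) (by norm_num) one_pos
  have hJ : ∀ a : ℝ, Integrable fun φ : ℝ => |a - φ| ^ (-(1/2) : ℝ) * rexp (-1 * |a - φ|) :=
    fun a => hI.comp_sub_left a
  have hm : MeasurableSet (Ioo (0:ℝ) (2 * π) \ {π + α, π - α}) :=
    measurableSet_Ioo.diff (Set.toFinite _).measurableSet
  have hfin : volume (Ioo (0:ℝ) (2 * π) \ {π + α, π - α}) ≠ ⊤ :=
    ne_top_of_le_ne_top measure_Ioo_lt_top.ne (measure_mono sdiff_subset)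
  have hmaj : IntegrableOn (fun φ : ℝ => 3 * (1
      + rexp (2 * π) * (|π + α - φ| ^ (-(1/2) : ℝ) * rexp (-1 * |π + α - φ|))
      + rexp (2 * π) * (|π - α - φ| ^ (-(1/2) : ℝ) * rexp (-1 * |π - α - φ|))))
      (Ioo (0:ℝ) (2 * π) \ {π + α, π - α}) :=
    (((integrableOn_const hfin).add ((hJ _).const_mul _).integrableOn).add
      ((hJ _).const_mul _).integrableOn).const_mul 3
  refine hmaj.mono' ?_ ?_
  · unfold angMaj
    have : Measurable fun φ : ℝ =>
      (1 + |π + α - φ| ^ (-(1/4) : ℝ) + |π - α - φ| ^ (-(1/4) : ℝ)) ^ 2 := by fun_prop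
    exact this.aestronglyMeasurable
  · filter_upwards [ae_restrict_mem hm] with φ hφ
    obtain ⟨⟨h0, h1⟩, -⟩ := hφ
    rw [Real.norm_of_nonneg (by positivity)]
    have key : ∀ t : ℝ, |t| ≤ 2 * π → (|t| ^ (-(1/4) : ℝ)) ^ 2 ≤
        rexp (2 * π) * (|t| ^ (-(1/2) : ℝ) * rexp (-1 * |t|)) := by
      intro t ht
      have e : (|t| ^ (-(1/4) : ℝ)) ^ 2 = |t| ^ (-(1/2) : ℝ) := by
        rw [← Real.rpow_mul_natCast (abs_nonneg t)]; norm_num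
      have h1 : 1 ≤ rexp (2 * π) * rexp (-1 * |t|) := by
        rw [← Real.exp_add]; exact Real.one_le_exp (by linarith)
      rw [e]
      calc |t| ^ (-(1/2) : ℝ) ≤ |t| ^ (-(1/2) : ℝ) * (rexp (2 * π) * rexp (-1 * |t|)) :=
            le_mul_of_one_le_right (by positivity) h1
        _ = _ := by ring
    have k1 := key (π + α - φ) (abs_le.mpr ⟨by linarith [hα.1], by linarith [hα.2]⟩)
    have k2 := key (π - α - φ) (abs_le.mpr ⟨by linarith [hα.2], by linarith [hα.1]⟩)
    unfold angMaj
    set A := |π + α - φ| ^ (-(1/4) : ℝ)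
    set B := |π - α - φ| ^ (-(1/4) : ℝ)
    nlinarith [sq_nonneg (A - B), sq_nonneg (A - 1), sq_nonneg (B - 1)]

/-- Square-integrability, with respect to `ρ dρ dφ`, of the kernel integral with an arbitrary
weight of size `O(cosh β)`; `A` and both components of its gradient have this form. -/
lemma integrableOn_weighted_sq {α M : ℝ} {ω : ℂ} {w : ℝ → ℂ} (hα : α ∈ Ioo (π / 2) π)
    (hω : 0 < ω.im) (hw : Measurable w) (hM : ∀ β, ‖w β‖ ≤ M * Real.cosh β) :
    IntegrableOn (fun x : ℝ × ℝ => x.1 * ‖∫ β : ℝ, Zker α β x.2 * w β * osc ω x.1 β‖ ^ 2)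
      (Ioi (0:ℝ) ×ˢ (Ioo (0:ℝ) (2 * π) \ {π + α, π - α})) := by
  have hM0 : 0 ≤ M := by simpa using (norm_nonneg _).trans (hM 0)
  obtain ⟨K, hK, h⟩ := exists_norm_Zker_mul_cosh_le hα hω
  set L := M * (K * ∫ β, radMaj β) with hL
  have hbound : ∀ φ ∈ Ioo (0:ℝ) (2 * π) \ {π + α, π - α}, ∀ ρ > 0,
      ‖∫ β : ℝ, Zker α β φ * w β * osc ω ρ β‖ ≤
        L * angMaj α φ * (ρ ^ (-(3/4) : ℝ) * rexp (-(ω.im / 2) * ρ)) := by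
    intro φ hφ ρ hρ
    have h1 : ∀ᵐ β : ℝ, ‖Zker α β φ * w β * osc ω ρ β‖ ≤
        M * (K * angMaj α φ * (ρ ^ (-(3/4) : ℝ) * rexp (-(ω.im / 2) * ρ)) * radMaj β) := by
      filter_upwards [Measure.ae_ne volume (0:ℝ)] with β hβ
      exact (norm_weighted_le hM β).trans (mul_le_mul_of_nonneg_left (h φ hφ ρ hρ β hβ) hM0)
    refine (norm_integral_le_of_norm_le ((integrable_radMaj.const_mul _).const_mul M) h1).trans
      (le_of_eq ?_)
    rw [integral_const_mul, integral_const_mul, hL]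
    ring
  have hS : MeasurableSet (Ioi (0:ℝ) ×ˢ (Ioo (0:ℝ) (2 * π) \ {π + α, π - α})) :=
    measurableSet_Ioi.prod (measurableSet_Ioo.diff (Set.toFinite _).measurableSet)
  have hρint : IntegrableOn (fun ρ : ℝ => ρ ^ (-(1/2) : ℝ) * rexp (-ω.im * ρ)) (Ioi 0) := by
    simpa using integrableOn_rpow_mul_exp_neg_mul_rpow (s := -(1/2)) (by norm_num) one_pos hω
  have hprod : IntegrableOn (fun x : ℝ × ℝ =>
      L ^ 2 * ((x.1 ^ (-(1/2) : ℝ) * rexp (-ω.im * x.1)) * angMaj α x.2 ^ 2))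
      (Ioi (0:ℝ) ×ˢ (Ioo (0:ℝ) (2 * π) \ {π + α, π - α})) := by
    rw [IntegrableOn, Measure.volume_eq_prod, ← Measure.prod_restrict]
    exact (Integrable.mul_prod hρint (integrableOn_angMaj_sq α hα)).const_mul _
  refine hprod.mono' ?_ ?_
  · have hmeas : StronglyMeasurable fun x : ℝ × ℝ =>
        ∫ β : ℝ, Zker α β x.2 * w β * osc ω x.1 β := by
      apply StronglyMeasurable.integral_prod_right'
        (f := fun p : (ℝ × ℝ) × ℝ => Zker α p.2 p.1.2 * w p.2 * osc ω p.1.1 p.2)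
      apply Measurable.stronglyMeasurable
      refine Measurable.mul (Measurable.mul ?_ (hw.comp measurable_snd)) ?_
      · exact measurable_Zker α measurable_snd (measurable_snd.comp measurable_fst)
      · exact measurable_osc ω (measurable_fst.comp measurable_fst) measurable_snd
    exact (measurable_fst.mul (hmeas.measurable.norm.pow_const 2)).aestronglyMeasurable
  · filter_upwards [ae_restrict_mem hS] with x hx
    obtain ⟨hρ, hφ⟩ := hx
    have hρ : 0 < x.1 := hρ
    rw [Real.norm_of_nonneg (by positivity)]
    have hb := hbound x.2 hφ x.1 hρ
    have e1 : x.1 * (x.1 ^ (-(3/4) : ℝ)) ^ 2 = x.1 ^ (-(1/2) : ℝ) := by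
      rw [← Real.rpow_mul_natCast hρ.le]
      nth_rewrite 1 [← Real.rpow_one x.1]
      rw [← Real.rpow_add hρ]; norm_num
    have e2 : rexp (-(ω.im / 2) * x.1) ^ 2 = rexp (-ω.im * x.1) := by
      rw [← Real.exp_nat_mul]; congr 1; push_cast; ring
    calc _ ≤ x.1 * (L * angMaj α x.2 *
          (x.1 ^ (-(3/4) : ℝ) * rexp (-(ω.im / 2) * x.1))) ^ 2 := by gcongr
      _ = L ^ 2 * ((x.1 * (x.1 ^ (-(3/4) : ℝ)) ^ 2 * rexp (-(ω.im / 2) * x.1) ^ 2)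
          * angMaj α x.2 ^ 2) := by ring
      _ = _ := by rw [e1, e2]

/-! ### The derivatives of the integral -/

lemma norm_I_mul_cosh_le (ω : ℂ) (β : ℝ) :
    ‖Complex.I * ω * (Real.cosh β : ℂ)‖ ≤ ‖ω‖ * Real.cosh β := by
  rw [norm_mul, norm_mul, Complex.norm_I, one_mul, Complex.norm_real,
    Real.norm_of_nonneg (Real.cosh_pos β).le]

lemma abs_sinh_le_cosh (β : ℝ) : |Real.sinh β| ≤ Real.cosh β :=
  abs_le_of_sq_le_sq (by rw [Real.cosh_sq]; linarith) (Real.cosh_pos β).le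

lemma norm_mul_sinh_le (a : ℂ) (β : ℝ) :
    ‖a * (Real.sinh β : ℂ)‖ ≤ ‖a‖ * Real.cosh β := by
  rw [norm_mul, Complex.norm_real, Real.norm_eq_abs]
  exact mul_le_mul_of_nonneg_left (abs_sinh_le_cosh β) (norm_nonneg _)

lemma hasDerivAt_osc_left (ω : ℂ) (ρ β : ℝ) :
    HasDerivAt (fun r : ℝ => osc ω r β)
      (Complex.I * ω * (Real.cosh β : ℂ) * osc ω ρ β) ρ := by
  unfold osc
  have h : HasDerivAt (fun r : ℝ => Complex.I * ω * (r : ℂ) * (Real.cosh β : ℂ))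
      (Complex.I * ω * 1 * (Real.cosh β : ℂ)) ρ :=
    ((Complex.ofRealCLM.hasDerivAt (x := ρ)).const_mul (Complex.I * ω)).mul_const _
  refine h.cexp.congr_deriv ?_
  ring

lemma hasDerivAt_osc_right (ω : ℂ) (ρ β : ℝ) :
    HasDerivAt (fun b : ℝ => osc ω ρ b)
      (Complex.I * ω * (ρ : ℂ) * (Real.sinh β : ℂ) * osc ω ρ β) β := by
  unfold osc
  have h : HasDerivAt (fun b : ℝ => Complex.I * ω * (ρ : ℂ) * (Real.cosh b : ℂ))
      (Complex.I * ω * (ρ : ℂ) * (Real.sinh β : ℂ)) β :=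
    (Real.hasDerivAt_cosh β).ofReal_comp.const_mul _
  refine h.cexp.congr_deriv ?_
  ring

lemma integrable_Zker_osc {α φ ρ : ℝ} {ω : ℂ} (hα : α ∈ Ioo (π / 2) π) (hω : 0 < ω.im)
    (hφ : φ ∈ Ioo (0:ℝ) (2 * π) \ {π + α, π - α}) (hρ : 0 < ρ) :
    Integrable fun β : ℝ => Zker α β φ * osc ω ρ β := by
  have h := integrable_weighted (w := fun _ => 1) (M := 1) hα hω hφ hρ measurable_const
    (fun β => by simp)
  simpa using h

lemma hasDerivAt_radial {α φ ρ : ℝ} {ω : ℂ} (hα : α ∈ Ioo (π / 2) π) (hω : 0 < ω.im)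
    (hφ : φ ∈ Ioo (0:ℝ) (2 * π) \ {π + α, π - α}) (hρ : 0 < ρ) :
    HasDerivAt (fun r : ℝ => ∫ β : ℝ, Zker α β φ * osc ω r β)
      (∫ β : ℝ, Zker α β φ * (Complex.I * ω * (Real.cosh β : ℂ)) * osc ω ρ β) ρ := by
  refine (hasDerivAt_integral_of_dominated_loc_of_deriv_le (s := Ioi (ρ / 2))
    (F := fun r β => Zker α β φ * osc ω r β)
    (F' := fun r β => Zker α β φ * (Complex.I * ω * (Real.cosh β : ℂ)) * osc ω r β)
    (bound := fun β => ‖ω‖ *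
      (‖Zker α β φ‖ * (Real.cosh β * rexp (-(ω.im * (ρ / 2) * Real.cosh β)))))
    (Ioi_mem_nhds (by linarith)) ?_ (integrable_Zker_osc hα hω hφ hρ) ?_ ?_ ?_ ?_).2
  · exact Eventually.of_forall fun r =>
      ((measurable_Zker_left α φ).mul (measurable_osc_right ω r)).aestronglyMeasurable
  · exact (integrable_weighted hα hω hφ hρ (by fun_prop)
      (norm_I_mul_cosh_le ω)).aestronglyMeasurable
  · refine Eventually.of_forall fun β r hr => ?_
    have hr : ρ / 2 < r := hr
    refine (norm_weighted_le (w := fun β : ℝ => Complex.I * ω * (Real.cosh β : ℂ))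
      (norm_I_mul_cosh_le ω) β).trans ?_
    have hc := Real.cosh_pos β
    gcongr
  · exact (integrable_kernel hα hω hφ (by linarith)).const_mul _
  · refine Eventually.of_forall fun β r _ => ?_
    refine ((hasDerivAt_osc_left ω r β).const_mul (Zker α β φ)).congr_deriv ?_
    ring

lemma integrable_exp_neg_cosh {a : ℝ} (ha : 0 < a) :
    Integrable fun β : ℝ => rexp (-(a * Real.cosh β)) := by
  have h := integrable_abs_rpow_mul_exp (s := 0) (c := a) (by norm_num) ha
  refine h.mono' (measurable_exp_cosh a).aestronglyMeasurable (Eventually.of_forall fun β => ?_)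
  rw [Real.norm_of_nonneg (Real.exp_pos _).le, Real.rpow_zero, one_mul]
  apply Real.exp_le_exp.mpr
  have h1 : |β| ≤ Real.cosh β := by
    refine le_trans ?_ (abs_sinh_le_cosh β)
    rw [Real.abs_sinh]
    exact Real.self_le_sinh_iff.mpr (abs_nonneg β)
  nlinarith

/-- Since the kernel depends on `β - iφ` only, its `φ`-derivative is `-i` times its
`β`-derivative; an integration by parts moves the latter onto the exponential. -/
lemma hasDerivAt_angular {α φ ρ : ℝ} {ω : ℂ} (hα : α ∈ Ioo (π / 2) π) (hω : 0 < ω.im)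
    (hφ : φ ∈ Ioo (0:ℝ) (2 * π) \ {π + α, π - α}) (hρ : 0 < ρ) :
    HasDerivAt (fun t : ℝ => ∫ β : ℝ, Zker α β t * osc ω ρ β)
      (ρ * ∫ β : ℝ, Zker α β φ * (-ω * (Real.sinh β : ℂ)) * osc ω ρ β) φ := by
  have hreg := regular_of_mem hα hφ
  obtain ⟨C, hC⟩ := eventually_regular_and_bound hreg
  have hmeas' : Measurable fun β : ℝ => Zq' α (β - Complex.I * φ) := by
    have h : Measurable fun β : ℝ => (β : ℂ) - Complex.I * (φ : ℂ) := by fun_prop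
    exact (measurable_Zq' α).comp h
  have hexp : Integrable fun β : ℝ => C * rexp (-(ω.im * ρ * Real.cosh β)) :=
    (integrable_exp_neg_cosh (mul_pos hω hρ)).const_mul C
  have hder := hasDerivAt_integral_of_dominated_loc_of_deriv_le
    (F := fun t β => Zker α β t * osc ω ρ β)
    (F' := fun t β => -Complex.I * Zq' α (β - Complex.I * t) * osc ω ρ β)
    (bound := fun β => C * rexp (-(ω.im * ρ * Real.cosh β))) (μ := volume)
    hC
    (Eventually.of_forall fun t =>
      ((measurable_Zker_left α t).mul (measurable_osc_right ω ρ)).aestronglyMeasurable)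
    (integrable_Zker_osc hα hω hφ hρ)
    ((hmeas'.const_mul _).mul (measurable_osc_right ω ρ)).aestronglyMeasurable
    (Eventually.of_forall fun β t ht => by
      rw [norm_mul, norm_mul, norm_neg, Complex.norm_I, one_mul, norm_osc]
      exact mul_le_mul_of_nonneg_right (ht.2 β) (Real.exp_pos _).le)
    hexp
    (Eventually.of_forall fun β t ht => (hasDerivAt_Zker_right ht.1).mul_const _)
  refine hder.2.congr_deriv ?_
  have hparts := integral_mul_deriv_eq_deriv_mul_of_integrable
    (u := fun β : ℝ => Zker α β φ) (v := fun β : ℝ => osc ω ρ β)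
    (u' := fun β : ℝ => Zq' α (β - Complex.I * φ))
    (v' := fun β : ℝ => Complex.I * ω * (ρ : ℂ) * (Real.sinh β : ℂ) * osc ω ρ β)
    (fun β _ => hasDerivAt_Zker_left hreg) (fun β _ => hasDerivAt_osc_right ω ρ β)
    (by
      have h := integrable_weighted hα hω hφ hρ
        (w := fun β : ℝ => Complex.I * ω * (ρ : ℂ) * (Real.sinh β : ℂ)) (by fun_prop)
        (norm_mul_sinh_le _)
      simpa only [mul_assoc] using! h)
    (hexp.mono' (hmeas'.mul (measurable_osc_right ω ρ)).aestronglyMeasurable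
      (Eventually.of_forall fun β => by
        simp only [Pi.mul_apply]
        rw [norm_mul, norm_osc]
        exact mul_le_mul_of_nonneg_right (hC.self_of_nhds.2 β) (Real.exp_pos _).le))
    (integrable_Zker_osc hα hω hφ hρ)
  have e1 : (∫ β : ℝ, -Complex.I * Zq' α (β - Complex.I * φ) * osc ω ρ β) =
      -Complex.I * ∫ β : ℝ, Zq' α (β - Complex.I * φ) * osc ω ρ β := by
    rw [← integral_const_mul]; simp only [mul_assoc]
  rw [e1, ← neg_eq_iff_eq_neg.mpr hparts, neg_mul_neg, ← integral_const_mul, ← integral_const_mul]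
  congr 1
  ext β
  linear_combination (Zker α β φ * ω * ρ * Real.sinh β * osc ω ρ β) * Complex.I_mul_I

/-- `H¹`-membership of the diffracted-wave integral `A(ρ,φ) = ∫_ℝ 𝒵(β,φ) e^{iωρ cosh β} dβ`
over the slit plane `Q`, expressed in polar coordinates: `A`, `∂_ρ A` and `ρ⁻¹ ∂_φ A`
are square-integrable with respect to the polar area element `ρ dρ dφ`, which is exactly the
square-integrability over `Q` of `A` and of its Cartesian partial derivatives
`∂_{x₁} A, ∂_{x₂} A` (defined off the rays `φ = φ₊` and `φ = φ₋`). -/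
theorem diffracted_integral_H1 (α : ℝ) (hα : α ∈ Set.Ioo (π/2) π)
    (ω : ℂ) (hω : 0 < ω.im) (A : ℝ → ℝ → ℂ)
    (hA : ∀ ρ φ : ℝ, A ρ φ = ∫ β : ℝ, Zker α β φ *
        Complex.exp (Complex.I * ω * (ρ : ℂ) * (Real.cosh β : ℂ))) :
    IntegrableOn (fun x : ℝ × ℝ => x.1 * ‖A x.1 x.2‖^2)
      (Set.Ioi (0:ℝ) ×ˢ (Set.Ioo (0:ℝ) (2*π) \ {π + α, π - α})) ∧
    IntegrableOn (fun x : ℝ × ℝ => x.1 * ‖deriv (fun r : ℝ => A r x.2) x.1‖^2)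
      (Set.Ioi (0:ℝ) ×ˢ (Set.Ioo (0:ℝ) (2*π) \ {π + α, π - α})) ∧
    IntegrableOn (fun x : ℝ × ℝ => x.1⁻¹ * ‖deriv (fun t : ℝ => A x.1 t) x.2‖^2)
      (Set.Ioi (0:ℝ) ×ˢ (Set.Ioo (0:ℝ) (2*π) \ {π + α, π - α})) := by
  have hS : MeasurableSet (Ioi (0:ℝ) ×ˢ (Ioo (0:ℝ) (2 * π) \ {π + α, π - α})) :=
    measurableSet_Ioi.prod (measurableSet_Ioo.diff (Set.toFinite _).measurableSet)
  have hA' : A = fun ρ φ => ∫ β : ℝ, Zker α β φ * osc ω ρ β := by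
    funext ρ φ; exact hA ρ φ
  subst hA'
  refine ⟨?_, ?_, ?_⟩
  · have h := integrableOn_weighted_sq (w := fun _ => 1) (M := 1) hα hω measurable_const
      (fun β => by simp)
    simpa only [mul_one] using h
  · refine (integrableOn_weighted_sq hα hω (by fun_prop) (norm_I_mul_cosh_le ω)).congr_fun ?_ hS
    rintro ⟨ρ, φ⟩ ⟨hρ, hφ⟩
    simp only [(hasDerivAt_radial hα hω hφ hρ).deriv]
  · refine (integrableOn_weighted_sq hα hω (by fun_prop) (norm_mul_sinh_le (-ω))).congr_fun ?_ hS
    rintro ⟨ρ, φ⟩ ⟨hρ, hφ⟩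
    have hρ : 0 < ρ := hρ
    simp only [(hasDerivAt_angular hα hω hφ hρ).deriv, norm_mul, Complex.norm_real,
      Real.norm_of_nonneg hρ.le]
    rw [mul_pow, ← mul_assoc]
    congr 1
    field_simp
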